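/- Let F_1, F_2, … be a uniformly attracting sequence of correctly ordered automorphisms of ℂ^k and let d ≥ 2. Then there exist a constant C > 0, a sequence X_0, X_1, … of polynomial self-maps of ℂ^k of degree at most d of the form X_n = identity + (terms of degree ≥ 2), with all coefficients of all X_n uniformly bounded, and a sequence G_1, G_2, … of lower triangular polynomial self-maps of ℂ^k of uniformly bounded degree with all coefficients uniformly bounded and with G_n′(0) = F_n′(0) for every n, such that ‖G_n(X_{n−1}(z)) − X_n(F_n(z))‖ ≤ C‖z‖^{d+1} for every n ≥ 1 and every z in the open unit ball of ℂ^k. -/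

import Mathlib

open Metric Filter Topology

noncomputable section

/-- `ℂ^k` with the Euclidean norm. -/
abbrev Ck (k : ℕ) := EuclideanSpace ℂ (Fin k)

/-- An automorphism of `ℂ^k`: a bijective holomorphic map with holomorphic inverse. -/
def IsAutomorphism {k : ℕ} (F : Ck k → Ck k) : Prop :=
  Differentiable ℂ F ∧ ∃ Finv : Ck k → Ck k, Differentiable ℂ Finv ∧
    Function.LeftInverse Finv F ∧ Function.RightInverse Finv F

/-- The matrix of the derivative of `F` at `0` in the standard basis. -/
def derivMatrix {k : ℕ} (F : Ck k → Ck k) : Matrix (Fin k) (Fin k) ℂ :=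
  fun i j => fderiv ℂ F 0 (EuclideanSpace.single j 1) i

/-- `F` is in lower triangular form: `F'(0)` is lower triangular. -/
def LowerTriAtZero {k : ℕ} (F : Ck k → Ck k) : Prop :=
  ∀ i j : Fin k, i < j → derivMatrix F i j = 0

/-- `F` is correctly ordered. -/
def CorrectlyOrdered {k : ℕ} (F : Ck k → Ck k) : Prop :=
  LowerTriAtZero F ∧
    ∀ l j i : Fin k, l ≤ j →
      ‖derivMatrix F j j‖ * ‖derivMatrix F i i‖ < ‖derivMatrix F l l‖

/-- A sequence of correctly ordered automorphisms is uniformly attracting. -/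
def UniformlyAttracting {k : ℕ} (F : ℕ → Ck k → Ck k) : Prop :=
  ∃ a b : ℝ, 0 < a ∧ a < b ∧ b < 1 ∧
    (∀ n, ∀ z ∈ ball (0 : Ck k) 1, a * ‖z‖ ≤ ‖F n z‖ ∧ ‖F n z‖ ≤ b * ‖z‖) ∧
    ∃ ξ : ℝ, ξ < 1 ∧ ∀ n, ∀ l j i : Fin k, l ≤ j →
      ‖derivMatrix (F n) i i‖ * ‖derivMatrix (F n) j j‖ ≤ ξ * ‖derivMatrix (F n) l l‖

/-- The polynomial self-map of `ℂ^k` determined by a `k`-tuple of polynomials. -/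
def evalPolyMap {k : ℕ} (P : Fin k → MvPolynomial (Fin k) ℂ) : Ck k → Ck k :=
  fun z => (WithLp.equiv 2 (∀ _ : Fin k, ℂ)).symm
    (fun j => MvPolynomial.eval (fun i => z i) (P j))

/-- A polynomial map `G = (g_1, …, g_k)` with `G(0) = 0` is lower triangular if
`g_j(z) = c_j z_j + h_j(z_1, …, z_{j-1})`. -/
def LowerTriPolyMap {k : ℕ} (P : Fin k → MvPolynomial (Fin k) ℂ) : Prop :=
  ∀ j : Fin k, (P j).coeff 0 = 0 ∧
    ∀ d ∈ (P j).support, d = Finsupp.single j 1 ∨ ∀ i : Fin k, j ≤ i → d i = 0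


section AlgPart

open MvPolynomial

variable {k : ℕ} {R : Type*} [CommRing R]

/-- all monomials have value at least `N`. -/
def OGe (v : (Fin k →₀ ℕ) →+ ℕ) (N : ℕ) (p : MvPolynomial (Fin k) R) : Prop :=
  ∀ m, coeff m p ≠ 0 → N ≤ v m

variable {v : (Fin k →₀ ℕ) →+ ℕ}

theorem OGe.zero (N : ℕ) : OGe v N (0 : MvPolynomial (Fin k) R) := by
  intro m hm; simp at hm

theorem OGe.mono {N M : ℕ} {p : MvPolynomial (Fin k) R} (h : OGe v N p) (hM : M ≤ N) :
    OGe v M p := fun m hm => hM.trans (h m hm)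

theorem OGe.add {N : ℕ} {p q : MvPolynomial (Fin k) R} (h : OGe v N p) (h' : OGe v N q) :
    OGe v N (p + q) := by
  intro m hm
  by_cases hp : coeff m p = 0
  · apply h'; intro hq; apply hm; simp [hp, hq]
  · exact h m hp

theorem OGe.neg {N : ℕ} {p : MvPolynomial (Fin k) R} (h : OGe v N p) :
    OGe v N (-p) := by
  intro m hm
  apply h; intro hp; apply hm; simp [hp]

theorem OGe.sub {N : ℕ} {p q : MvPolynomial (Fin k) R} (h : OGe v N p) (h' : OGe v N q) :
    OGe v N (p - q) := by
  rw [sub_eq_add_neg]; exact h.add h'.neg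

theorem OGe.mul {N M : ℕ} {p q : MvPolynomial (Fin k) R} (h : OGe v N p) (h' : OGe v M q) :
    OGe v (N + M) (p * q) := by
  classical
  intro m hm
  rw [coeff_mul] at hm
  obtain ⟨x, hx, hne⟩ := Finset.exists_ne_zero_of_sum_ne_zero hm
  rw [Finset.HasAntidiagonal.mem_antidiagonal] at hx
  have h1 := h x.1 (left_ne_zero_of_mul hne)
  have h2 := h' x.2 (right_ne_zero_of_mul hne)
  rw [← hx, map_add]; omega

theorem OGe.any (p : MvPolynomial (Fin k) R) : OGe v 0 p := fun _ _ => Nat.zero_le _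

theorem OGe.C_mul {N : ℕ} {p : MvPolynomial (Fin k) R} (c : R) (h : OGe v N p) :
    OGe v N (C c * p) := by
  have := (OGe.any (v := v) (C c)).mul h
  simpa using this

theorem OGe.sum {ι : Type*} (s : Finset ι) {N : ℕ} {p : ι → MvPolynomial (Fin k) R}
    (h : ∀ i ∈ s, OGe v N (p i)) : OGe v N (∑ i ∈ s, p i) := by
  classical
  induction s using Finset.induction_on with
  | empty => simpa using OGe.zero N
  | insert a s ha ih =>
    rw [Finset.sum_insert ha]
    exact (h a (by simp)).add (ih fun i hi => h i (by simp [hi]))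

theorem OGe.monomial (m : Fin k →₀ ℕ) (c : R) : OGe v (v m) (monomial m c) := by
  classical
  intro m' hm
  rw [coeff_monomial] at hm
  split_ifs at hm with h
  · rw [h]
  · exact absurd rfl hm

theorem OGe.coeff_eq_zero {N : ℕ} {p : MvPolynomial (Fin k) R} (h : OGe v N p)
    {m : Fin k →₀ ℕ} (hm : v m < N) : coeff m p = 0 := by
  by_contra hne
  exact absurd (h m hne) (by omega)

/-- `p = c z^α + ` terms of greater value. -/
def Lead (v : (Fin k →₀ ℕ) →+ ℕ) (α : Fin k →₀ ℕ) (c : R) (p : MvPolynomial (Fin k) R) : Prop :=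
  OGe v (v α + 1) (p - MvPolynomial.monomial α c)

theorem Lead.mul {α β : Fin k →₀ ℕ} {c e : R} {p q : MvPolynomial (Fin k) R}
    (h : Lead v α c p) (h' : Lead v β e q) : Lead v (α + β) (c * e) (p * q) := by
  unfold Lead at *
  have e1 : p * q - MvPolynomial.monomial (α + β) (c * e) =
      (p - MvPolynomial.monomial α c) * (q - MvPolynomial.monomial β e)
      + (p - MvPolynomial.monomial α c) * MvPolynomial.monomial β e
      + MvPolynomial.monomial α c * (q - MvPolynomial.monomial β e) := by
    have : MvPolynomial.monomial (α + β) (c * e) =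
      MvPolynomial.monomial α c * MvPolynomial.monomial β e := by rw [monomial_mul]
    rw [this]; ring
  rw [e1, map_add]
  refine OGe.add (OGe.add ?_ ?_) ?_
  · exact (h.mul h').mono (by omega)
  · exact (h.mul (OGe.monomial β e)).mono (by omega)
  · exact ((OGe.monomial α c).mul h').mono (by omega)

theorem Lead.one : Lead v (0 : Fin k →₀ ℕ) (1 : R) 1 := by
  unfold Lead
  have : (1 : MvPolynomial (Fin k) R) - MvPolynomial.monomial 0 1 = 0 := by
    simp
  rw [this]; exact OGe.zero _

theorem Lead.pow {α : Fin k →₀ ℕ} {c : R} {p : MvPolynomial (Fin k) R}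
    (h : Lead v α c p) (n : ℕ) : Lead v (n • α) (c ^ n) (p ^ n) := by
  induction n with
  | zero => simpa using Lead.one
  | succ n ih =>
    rw [pow_succ, pow_succ, succ_nsmul]; exact ih.mul h

theorem Lead.prod {ι : Type*} (s : Finset ι) {α : ι → Fin k →₀ ℕ} {c : ι → R}
    {p : ι → MvPolynomial (Fin k) R} (h : ∀ i ∈ s, Lead v (α i) (c i) (p i)) :
    Lead v (∑ i ∈ s, α i) (∏ i ∈ s, c i) (∏ i ∈ s, p i) := by
  classical
  induction s using Finset.induction_on with
  | empty => simpa using Lead.one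
  | insert a s ha ih =>
    rw [Finset.sum_insert ha, Finset.prod_insert ha, Finset.prod_insert ha]
    exact (h a (by simp)).mul (ih fun i hi => h i (by simp [hi]))

theorem Lead.bind {f : Fin k → MvPolynomial (Fin k) R} {c : Fin k → R}
    (h : ∀ i, Lead v (Finsupp.single i 1) (c i) (f i)) (α : Fin k →₀ ℕ) (y : R) :
    Lead v α (y * ∏ i ∈ α.support, c i ^ α i) (bind₁ f (MvPolynomial.monomial α y)) := by
  rw [bind₁_monomial]
  have h1 := Lead.prod (v := v) α.support (fun i _ => (h i).pow (α i))
  have h2 : ∑ i ∈ α.support, α i • Finsupp.single i 1 = α := by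
    conv_rhs => rw [← Finsupp.sum_single α]
    simp [Finsupp.sum]
  rw [h2] at h1
  unfold Lead at *
  have := h1.C_mul y
  rw [mul_sub, C_mul_monomial] at this
  exact this

theorem bind_diff {X X' : Fin k → MvPolynomial (Fin k) R} {N K : ℕ}
    (hX' : ∀ i, OGe v K (X' i)) (hX : ∀ i, OGe v K (X i))
    (hd : ∀ i, OGe v N (X' i - X i)) (g : MvPolynomial (Fin k) R) :
    OGe v (N + K) (bind₁ X' g - bind₁ X g -
      ∑ i, C (coeff (Finsupp.single i 1) g) * (X' i - X i)) := by
  classical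
  have h0 : ∀ p : MvPolynomial (Fin k) R, OGe v K (bind₁ X p - C (coeff 0 p)) := by
    intro p
    induction p using MvPolynomial.induction_on with
    | C a => simpa using OGe.zero _
    | add p q hp hq =>
      have := hp.add hq
      convert this using 1
      simp only [map_add, coeff_add]; ring
    | mul_X p i hp =>
      have : coeff 0 (p * MvPolynomial.X i) = 0 := by simp [coeff_mul_X']
      rw [this]
      simpa using (OGe.any (bind₁ X p)).mul (hX i)
  induction g using MvPolynomial.induction_on with
  | C a =>
    have : ∀ i : Fin k, coeff (Finsupp.single i 1) (C a : MvPolynomial (Fin k) R) = 0 := by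
      intro i
      rw [coeff_C, if_neg]
      intro h
      have := congrArg (fun x => x i) h
      simp at this
    simpa [this] using OGe.zero _
  | add p q hp hq =>
    have := hp.add hq
    convert this using 1
    simp only [map_add, coeff_add, add_mul, Finset.sum_add_distrib]; ring
  | mul_X p j hp =>
    have e1 : ∑ i, C (coeff (Finsupp.single i 1) (p * MvPolynomial.X j)) * (X' i - X i) =
        C (coeff 0 p) * (X' j - X j) := by
      rw [Finset.sum_eq_single j]
      · congr 2
        rw [coeff_mul_X']; simp
      · intro i _ hij
        have : coeff (Finsupp.single i 1) (p * MvPolynomial.X j) = 0 := by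
          rw [coeff_mul_X', if_neg]
          simpa using Ne.symm hij
        rw [this]; simp
      · simp
    rw [e1]
    have e2 : bind₁ X' (p * MvPolynomial.X j) - bind₁ X (p * MvPolynomial.X j)
        - C (coeff 0 p) * (X' j - X j) =
        (bind₁ X' p - bind₁ X p) * X' j + (bind₁ X p - C (coeff 0 p)) * (X' j - X j) := by
      simp only [map_mul, bind₁_X_right]; ring
    rw [e2]
    refine OGe.add (OGe.mul ?_ (hX' j)) (((h0 p).mul (hd j)).mono (by omega))
    have h3 : OGe v N (∑ i, C (coeff (Finsupp.single i 1) p) * (X' i - X i)) :=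
      OGe.sum _ fun i _ => (hd i).C_mul _
    have := (hp.mono (show N ≤ N + K by omega)).add h3
    simpa using this

/-- the weight used -/
def wv (k : ℕ) : (Fin k →₀ ℕ) →+ ℕ := Finsupp.weight (R := ℕ) (fun i : Fin k => 3 * k - (i : ℕ))

theorem wv_single (i : Fin k) : wv k (Finsupp.single i 1) = 3 * k - i := by
  simp [wv, Finsupp.weight_single]

theorem wv_ge (α : Fin k →₀ ℕ) : (2 * k + 1) * α.degree ≤ wv k α := by
  rw [wv, Finsupp.weight_apply, Finsupp.degree_apply, Finsupp.sum, Finset.mul_sum]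
  refine Finset.sum_le_sum fun i _ => ?_
  have := i.2
  rw [smul_eq_mul, mul_comm]
  gcongr
  omega

theorem wv_le (α : Fin k →₀ ℕ) : wv k α ≤ 3 * k * α.degree := by
  rw [wv, Finsupp.weight_apply, Finsupp.degree_apply, Finsupp.sum, Finset.mul_sum]
  refine Finset.sum_le_sum fun i _ => ?_
  rw [smul_eq_mul, mul_comm]
  gcongr
  omega

theorem degree_eq_one {α : Fin k →₀ ℕ} (h : α.degree = 1) : ∃ i, α = Finsupp.single i 1 := by
  have hne : α ≠ 0 := by rintro rfl; simp at h
  obtain ⟨i, hi⟩ := Finsupp.ne_iff.1 hne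
  refine ⟨i, ?_⟩
  have hle : Finsupp.single i 1 ≤ α := by
    rw [Finsupp.single_le_iff]; simp at hi; omega
  obtain ⟨γ, hγ⟩ := exists_add_of_le hle
  rw [hγ, map_add, Finsupp.degree_single] at h
  have : γ.degree = 0 := by omega
  rw [Finsupp.degree_eq_zero_iff] at this
  rw [hγ, this, add_zero]

theorem lead_of_lower {f : MvPolynomial (Fin k) R} (j : Fin k) (c : R) (h0 : coeff 0 f = 0)
    (hc : coeff (Finsupp.single j 1) f = c)
    (h1 : ∀ i, j < i → coeff (Finsupp.single i 1) f = 0) :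
    Lead (wv k) (Finsupp.single j 1) c f := by
  classical
  intro m hm
  rw [coeff_sub, coeff_monomial] at hm
  rw [wv_single]
  rcases Nat.lt_or_ge m.degree 2 with h2 | h2
  · rcases Nat.lt_or_ge m.degree 1 with h3 | h3
    · have : m = 0 := by rw [← Finsupp.degree_eq_zero_iff]; omega
      subst this
      exfalso; apply hm
      rw [h0, if_neg]; · simp
      intro h
      have := congrArg (fun x => x j) h
      simp at this
    · obtain ⟨i, rfl⟩ := degree_eq_one (α := m) (by omega)
      rw [wv_single]
      by_cases hij : j = i
      · subst hij; simp [hc] at hm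
      · rw [if_neg] at hm
        · by_cases hlt : j < i
          · simp [h1 i hlt] at hm
          · have : i < j := lt_of_le_of_ne (not_lt.1 hlt) (Ne.symm hij)
            have := j.2
            omega
        · intro h
          exact hij (Finsupp.single_left_injective one_ne_zero h)
  · have := wv_ge m
    have : (2 * k + 1) * 2 ≤ (2 * k + 1) * m.degree := by gcongr
    omega

theorem oge_of_coeff_zero {f : MvPolynomial (Fin k) R} (h0 : coeff 0 f = 0) :
    OGe (wv k) (2 * k) f := by
  intro m hm
  have : m.degree ≠ 0 := by
    intro h; rw [Finsupp.degree_eq_zero_iff] at h; subst h; exact hm h0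
  have := wv_ge m
  have : (2 * k + 1) * 1 ≤ (2 * k + 1) * m.degree := by gcongr; omega
  omega

/-- invariants -/
structure CInv (d : ℕ) (A : Fin k → Fin k → R) (X G : Fin k → MvPolynomial (Fin k) R) : Prop where
  Xdeg : ∀ j m, coeff m (X j) ≠ 0 → m.degree ≤ d
  X0 : ∀ j, coeff 0 (X j) = 0
  X1 : ∀ j i, coeff (Finsupp.single i 1) (X j) = if i = j then 1 else 0
  Gdeg : ∀ j m, coeff m (G j) ≠ 0 → m.degree ≤ d
  G0 : ∀ j, coeff 0 (G j) = 0
  G1 : ∀ j i, coeff (Finsupp.single i 1) (G j) = A j i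
  Glow : ∀ j m, coeff m (G j) ≠ 0 → m = Finsupp.single j 1 ∨ ∀ i : Fin k, j ≤ i → m i = 0

theorem alg_main (σ : R →+* R) (d : ℕ) (hd : 2 ≤ d) (f : Fin k → MvPolynomial (Fin k) R)
    (A : Fin k → Fin k → R)
    (f0 : ∀ j, coeff 0 (f j) = 0) (f1 : ∀ j i, coeff (Finsupp.single i 1) (f j) = A j i)
    (hA : ∀ j i, j < i → A j i = 0)
    (hsolve : ∀ (α : Fin k →₀ ℕ) (j : Fin k), 2 ≤ α.degree → (∃ l, j ≤ l ∧ α l ≠ 0) →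
      ∀ e : R, ∃ y : R, A j j * y - σ y * ∏ i ∈ α.support, A i i ^ α i = e) :
    ∃ X G : Fin k → MvPolynomial (Fin k) R, CInv d A X G ∧
      ∀ j m, m.degree ≤ d → coeff m (bind₁ X (G j) - bind₁ f (map σ (X j))) = 0 := by
  classical
  let key : (Fin k →₀ ℕ) × Fin k → ℕ := fun p => wv k p.1 + p.2
  let T : Finset ((Fin k →₀ ℕ) × Fin k) :=
    (Finsupp.finite_of_degree_le (σ := Fin k) d).toFinset ×ˢ Finset.univ
  have main : ∀ s : Finset ((Fin k →₀ ℕ) × Fin k),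
      ∃ X G : Fin k → MvPolynomial (Fin k) R, CInv d A X G ∧
      ∀ j m, (m.degree ≤ 1 ∨ ((m, j) ∈ s ∧ m.degree ≤ d)) →
        coeff m (bind₁ X (G j) - bind₁ f (map σ (X j))) = 0 := by
    intro s
    induction s using Finset.induction_on_max_value key with
    | empty =>
      have hlin : ∀ j l, coeff (Finsupp.single l 1)
          (∑ i, MvPolynomial.monomial (Finsupp.single i 1) (A j i)) = A j l := by
        intro j l
        rw [coeff_sum, Finset.sum_eq_single l]
        · simp
        · intro i _ hi
          rw [coeff_monomial, if_neg]
          intro h'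
          exact hi (Finsupp.single_left_injective one_ne_zero h')
        · simp
      have hG0 : ∀ j, coeff 0
          (∑ i, MvPolynomial.monomial (Finsupp.single i 1) (A j i)) = 0 := by
        intro j
        rw [coeff_sum]
        refine Finset.sum_eq_zero fun i _ => ?_
        rw [coeff_monomial, if_neg]
        simp
      refine ⟨fun j => MvPolynomial.X j, fun j => ∑ i, MvPolynomial.monomial (Finsupp.single i 1) (A j i), ?_, ?_⟩
      · have hc : ∀ j m, coeff m (∑ i, MvPolynomial.monomial (Finsupp.single i 1) (A j i)) ≠ 0 →
            ∃ i, m = Finsupp.single i 1 ∧ i ≤ j := by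
          intro j m hm
          rw [coeff_sum] at hm
          obtain ⟨i, _, hi⟩ := Finset.exists_ne_zero_of_sum_ne_zero hm
          rw [coeff_monomial] at hi
          split_ifs at hi with h
          · refine ⟨i, h.symm, ?_⟩
            by_contra hlt
            exact hi (hA j i (not_le.1 hlt))
          · exact absurd rfl hi
        refine ⟨?_, ?_, ?_, ?_, ?_, hlin, ?_⟩
        · intro j m hm
          rw [MvPolynomial.coeff_X] at hm
          split_ifs at hm with h
          · rw [← h, Finsupp.degree_single]; omega
          · exact absurd rfl hm
        · intro j
          simp
        · intro j i
          rw [MvPolynomial.coeff_X]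
          by_cases h : i = j
          · simp [h]
          · rw [if_neg, if_neg h]
            intro h'
            exact h (Finsupp.single_left_injective one_ne_zero h').symm
        · intro j m hm
          obtain ⟨i, rfl, _⟩ := hc j m hm
          rw [Finsupp.degree_single]; omega
        · exact hG0
        · intro j m hm
          obtain ⟨i, rfl, hij⟩ := hc j m hm
          rcases hij.eq_or_lt with h | h
          · left; rw [h]
          · right
            intro l hl
            rw [Finsupp.single_apply, if_neg]
            rintro rfl; exact absurd h (not_lt.2 hl)
      · intro j m hm
        have hm : m.degree ≤ 1 := by
          rcases hm with h | ⟨h, _⟩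
          · exact h
          · simp at h
        have hid : bind₁ (fun j => MvPolynomial.X j)
            (∑ i, MvPolynomial.monomial (Finsupp.single i 1) (A j i)) =
            (∑ i, MvPolynomial.monomial (Finsupp.single i 1) (A j i)) := by
          exact DFunLike.congr_fun bind₁_X_left _
        rw [hid, map_X, bind₁_X_right, coeff_sub]
        rcases Nat.lt_or_ge m.degree 1 with h3 | h3
        · have : m = 0 := by rw [← Finsupp.degree_eq_zero_iff]; omega
          rw [this, hG0, f0, sub_zero]
        · obtain ⟨i, rfl⟩ := degree_eq_one (α := m) (by omega)
          rw [hlin, f1, sub_self]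
    | insert a s ha hmax ih => 
      obtain ⟨α, j⟩ := a
      obtain ⟨X, G, hI, hE⟩ := ih
      by_cases hα : 2 ≤ α.degree ∧ α.degree ≤ d
      swap
      · refine ⟨X, G, hI, fun i m hm => hE i m ?_⟩
        rcases hm with hm | ⟨hm, hm'⟩
        · exact Or.inl hm
        · rw [Finset.mem_insert] at hm
          rcases hm with hm | hm
          · obtain ⟨rfl, rfl⟩ := Prod.mk.inj hm
            left; omega
          · exact Or.inr ⟨hm, hm'⟩
      obtain ⟨hα2, hαd⟩ := hα
      have keyfact : ∀ (i : Fin k) m, (m.degree ≤ 1 ∨ ((m, i) ∈ insert (α, j) s ∧ m.degree ≤ d)) →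
          (m = α ∧ i = j) ∨ (¬ (m = α ∧ i = j) ∧ wv k m + i ≤ wv k α + j ∧
            coeff m (bind₁ X (G i) - bind₁ f (map σ (X i))) = 0) := by
        intro i m hm
        by_cases hh : m = α ∧ i = j
        · exact Or.inl hh
        · right
          refine ⟨hh, ?_, hE i m ?_⟩
          · rcases hm with hm | ⟨hm, hm'⟩
            · have h1 := wv_le m
              have h2 := wv_ge α
              have : (2 * k + 1) * 2 ≤ (2 * k + 1) * α.degree := by gcongr
              have : 3 * k * m.degree ≤ 3 * k * 1 := by gcongr
              have := i.2
              omega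
            · rw [Finset.mem_insert] at hm
              rcases hm with hm | hm
              · exact absurd (Prod.mk.inj hm) hh
              · exact hmax _ hm
          · rcases hm with hm | ⟨hm, hm'⟩
            · exact Or.inl hm
            · rw [Finset.mem_insert] at hm
              rcases hm with hm | hm
              · exact absurd (Prod.mk.inj hm) hh
              · exact Or.inr ⟨hm, hm'⟩
      have hα0 : ∀ c : R, coeff 0 (MvPolynomial.monomial α c) = 0 := by
        intro c
        rw [coeff_monomial, if_neg]
        rintro rfl; simp at hα2
      have hα1 : ∀ (c : R) i, coeff (Finsupp.single i 1) (MvPolynomial.monomial α c) = 0 := by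
        intro c i
        rw [coeff_monomial, if_neg]
        rintro rfl; simp at hα2
      have hαc : ∀ (c : R) m, coeff m (MvPolynomial.monomial α c) ≠ 0 → m = α := by
        intro c m hm
        rw [coeff_monomial] at hm
        by_contra h
        rw [if_neg (Ne.symm h)] at hm
        exact hm rfl
      by_cases hlow : ∃ l, j ≤ l ∧ α l ≠ 0
      · -- modify X
        obtain ⟨y, hy⟩ := hsolve α j hα2 hlow
          (-coeff α (bind₁ X (G j) - bind₁ f (map σ (X j))))
        let Y : Fin k → MvPolynomial (Fin k) R := fun i => if i = j then MvPolynomial.monomial α y else 0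
        have hY0 : ∀ i, coeff 0 (Y i) = 0 := by
          intro i; simp only [Y]; split_ifs
          · exact hα0 y
          · simp
        refine ⟨fun i => X i + Y i, G, ⟨?_, ?_, ?_, hI.Gdeg, hI.G0, hI.G1, hI.Glow⟩, ?_⟩
        · intro i m hm
          by_cases h : coeff m (X i) = 0
          · have : coeff m (Y i) ≠ 0 := by
              intro h'; apply hm; simp [h, h']
            simp only [Y] at this
            split_ifs at this with hij
            · rw [hαc _ _ this]; exact hαd
            · simp at this
          · exact hI.Xdeg i m h
        · intro i; rw [coeff_add, hI.X0, hY0, add_zero]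
        · intro i l; rw [coeff_add, hI.X1]
          simp only [Y]; split_ifs <;> simp [hα1]
        · intro i m hm
          have hb := bind_diff (v := wv k) (X := X) (X' := fun i => X i + Y i) (N := wv k α) (K := 2 * k)
            (fun i => oge_of_coeff_zero (by rw [coeff_add, hI.X0, hY0, add_zero]))
            (fun i => oge_of_coeff_zero (hI.X0 i))
            (fun i => by
              simp only [Y, add_sub_cancel_left]
              split_ifs
              · exact OGe.monomial _ _
              · exact OGe.zero _) (G i)
          have hs : ∑ l, C (coeff (Finsupp.single l 1) (G i)) * (X l + Y l - X l) =
              MvPolynomial.monomial α (A i j * y) := by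
            rw [Finset.sum_eq_single j]
            · simp only [Y, add_sub_cancel_left, if_true, hI.G1]
              rw [C_mul_monomial]
            · intro b _ hbj; simp [Y, hbj]
            · simp
          rw [hs] at hb
          have hl := Lead.bind (v := wv k) (f := f) (c := fun i => A i i)
            (fun i => lead_of_lower i _ (f0 i) (f1 i i) (fun l hl => by rw [f1, hA _ _ hl])) α (σ y)
          unfold Lead at hl
          have hmap : bind₁ f (map σ (X i + Y i)) = bind₁ f (map σ (X i)) +
              if i = j then bind₁ f (MvPolynomial.monomial α (σ y)) else 0 := by
            simp only [Y, map_add]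
            split_ifs
            · rw [map_monomial]
            · simp
          rw [hmap]
          rcases keyfact i m hm with ⟨rfl, rfl⟩ | ⟨hne, hk, h0⟩
          · have c1 := hb.coeff_eq_zero (m := m) (by have := i.2; omega)
            have c2 := hl.coeff_eq_zero (m := m) (by omega)
            simp only [coeff_sub, coeff_add, if_true, coeff_monomial] at c1 c2 hy ⊢
            linear_combination c1 - c2 + hy
          · have c1 := hb.coeff_eq_zero (m := m) (by have := i.2; have := j.2; omega)
            by_cases hij : i = j
            · subst hij
              have hmα : m ≠ α := fun h => hne ⟨h, rfl⟩
              have c2 := hl.coeff_eq_zero (m := m) (by omega)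
              simp only [coeff_sub, coeff_add, if_true, coeff_monomial, if_neg (Ne.symm hmα)] at c1 c2 h0 ⊢
              linear_combination c1 - c2 + h0
            · have c3 : coeff m (MvPolynomial.monomial α (A i j * y)) = 0 := by
                rw [coeff_monomial]
                split_ifs with hmα
                · subst hmα
                  have : i < j := by
                    rcases lt_trichotomy i j with h | h | h
                    · exact h
                    · exact absurd h hij
                    · have : (j : ℕ) < i := h
                      omega
                  rw [hA i j this, zero_mul]
                · rfl
              rw [if_neg hij, add_zero]
              simp only [coeff_sub, c3] at c1 h0 ⊢
              linear_combination c1 + h0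
      · -- modify G
        push Not at hlow
        let e := -coeff α (bind₁ X (G j) - bind₁ f (map σ (X j)))
        let H : Fin k → MvPolynomial (Fin k) R := fun i => if i = j then MvPolynomial.monomial α e else 0
        have hHc : ∀ i m, coeff m (G i + H i) ≠ 0 → coeff m (G i) ≠ 0 ∨ (i = j ∧ m = α) := by
          intro i m hm
          by_cases h : coeff m (G i) = 0
          · have : coeff m (H i) ≠ 0 := by
              intro h'; apply hm; simp [h, h']
            simp only [H] at this
            split_ifs at this with hij
            · exact Or.inr ⟨hij, hαc _ _ this⟩
            · simp at this
          · exact Or.inl h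
        refine ⟨X, fun i => G i + H i, ⟨hI.Xdeg, hI.X0, hI.X1, ?_, ?_, ?_, ?_⟩, ?_⟩
        · intro i m hm
          rcases hHc i m hm with h | ⟨_, rfl⟩
          · exact hI.Gdeg i m h
          · exact hαd
        · intro i; rw [coeff_add, hI.G0]
          simp only [H]; split_ifs <;> simp [hα0]
        · intro i l; rw [coeff_add, hI.G1]
          simp only [H]; split_ifs <;> simp [hα1]
        · intro i m hm
          rcases hHc i m hm with h | ⟨rfl, rfl⟩
          · exact hI.Glow i m h
          · exact Or.inr hlow
        · intro i m hm
          have hl := Lead.bind (v := wv k) (f := X) (c := fun _ => 1)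
            (fun i => lead_of_lower i _ (hI.X0 i) (by rw [hI.X1]; simp)
              (fun l hl => by rw [hI.X1, if_neg hl.ne'])) α e
          unfold Lead at hl
          simp only [one_pow, Finset.prod_const_one, mul_one] at hl
          have hmap : bind₁ X (G i + H i) = bind₁ X (G i) +
              if i = j then bind₁ X (MvPolynomial.monomial α e) else 0 := by
            simp only [H, map_add]
            split_ifs
            · rfl
            · simp
          rw [hmap]
          rcases keyfact i m hm with ⟨rfl, rfl⟩ | ⟨hne, hk, h0⟩
          · have c2 := hl.coeff_eq_zero (m := m) (by omega)
            have he : e = -coeff m (bind₁ X (G i) - bind₁ f (map σ (X i))) := rfl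
            simp only [coeff_sub, coeff_add, if_true, coeff_monomial] at c2 he ⊢
            linear_combination c2 + he
          · by_cases hij : i = j
            · subst hij
              have hmα : m ≠ α := fun h => hne ⟨h, rfl⟩
              have c2 := hl.coeff_eq_zero (m := m) (by omega)
              simp only [coeff_sub, coeff_add, if_true, coeff_monomial, if_neg (Ne.symm hmα)] at c2 h0 ⊢
              linear_combination c2 + h0
            · rw [if_neg hij, add_zero]; exact h0
  obtain ⟨X, G, hI, hE⟩ := main T
  refine ⟨X, G, hI, fun j m hm => hE j m (Or.inr ⟨?_, hm⟩)⟩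
  simp [T, hm]

end AlgPart

section TaylorPart

open MvPolynomial

variable {k : ℕ}

/-- separately holomorphic and bounded on polydiscs -/
def SepHol (F : (Fin k → ℂ) → ℂ) : Prop :=
  (∀ z i, Differentiable ℂ fun t => F (Function.update z i t)) ∧
    ∀ R : ℝ, ∃ M : ℝ, ∀ z, ‖z‖ ≤ R → ‖F z‖ ≤ M

/-- difference quotient in the `i`-th variable -/
def qd (F : (Fin k → ℂ) → ℂ) (i : Fin k) (z : Fin k → ℂ) : ℂ :=
  dslope (fun t => F (Function.update z i t)) 0 (z i)

theorem qd_eq (F : (Fin k → ℂ) → ℂ) (i : Fin k) (z : Fin k → ℂ) :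
    F z = F (Function.update z i 0) + z i * qd F i z := by
  have := sub_smul_dslope (fun t => F (Function.update z i t)) 0 (z i)
  simp only [sub_zero, smul_eq_mul, Function.update_eq_self] at this
  unfold qd
  rw [this]; ring

theorem qd_update (F : (Fin k → ℂ) → ℂ) (i : Fin k) (z : Fin k → ℂ) (t : ℂ) :
    qd F i (Function.update z i t) = dslope (fun t => F (Function.update z i t)) 0 t := by
  simp [qd]

theorem qd_diff_self {F : (Fin k → ℂ) → ℂ} {i : Fin k}
    (hF : ∀ z, Differentiable ℂ fun t => F (Function.update z i t)) (z : Fin k → ℂ) :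
    Differentiable ℂ fun t => qd F i (Function.update z i t) := by
  simp only [qd_update]
  rw [← differentiableOn_univ]
  have := (Complex.differentiableOn_dslope (f := fun t => F (Function.update z i t))
    (s := Set.univ) (c := 0) Filter.univ_mem).2 (hF z).differentiableOn
  exact this

theorem norm_update_le {z : Fin k → ℂ} {r : ℝ} (hz : ‖z‖ ≤ r) (i : Fin k) {t : ℂ}
    (ht : ‖t‖ ≤ r) : ‖Function.update z i t‖ ≤ r := by
  have hr : 0 ≤ r := (norm_nonneg _).trans hz
  rw [pi_norm_le_iff_of_nonneg hr] at hz ⊢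
  intro j
  by_cases h : j = i
  · subst h; simpa using ht
  · simpa [h] using hz j

theorem qd_bound {F : (Fin k → ℂ) → ℂ} {i : Fin k}
    (hF : ∀ z, Differentiable ℂ fun t => F (Function.update z i t)) {r M : ℝ} (hr : 0 < r)
    (hM : ∀ z, ‖z‖ ≤ r → ‖F z‖ ≤ M) (z : Fin k → ℂ) (hz : ‖z‖ ≤ r) :
    ‖qd F i z‖ ≤ 2 * M / r := by
  have h1 := Complex.norm_le_of_forall_mem_frontier_norm_le (U := ball (0 : ℂ) r)
    (f := fun t => qd F i (Function.update z i t)) isBounded_ball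
    (qd_diff_self hF z).diffContOnCl (C := 2 * M / r) ?_ (z := z i) ?_
  · simpa using h1
  · intro t ht
    rw [frontier_ball _ hr.ne'] at ht
    have ht' : ‖t‖ = r := by simpa using ht
    have h2 := qd_eq F i (Function.update z i t)
    simp only [Function.update_idem, Function.update_self] at h2
    have h3 : t * qd F i (Function.update z i t) =
        F (Function.update z i t) - F (Function.update z i 0) := by rw [h2]; ring
    have h4 : r * ‖qd F i (Function.update z i t)‖ ≤ 2 * M := by
      rw [← ht', ← norm_mul, h3]
      refine (norm_sub_le _ _).trans ?_
      have a1 := hM _ (norm_update_le hz i ht'.le)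
      have a2 := hM _ (norm_update_le hz i (t := 0) (by simpa using hr.le))
      linarith
    rw [le_div_iff₀ hr]; linarith
  · rw [closure_ball _ hr.ne']
    simpa using (norm_le_pi_norm z i).trans hz

theorem SepHol.qd {F : (Fin k → ℂ) → ℂ} (hF : SepHol F) (i : Fin k) : SepHol (qd F i) := by
  have hbd : ∀ (G : (Fin k → ℂ) → ℂ), (∀ z, Differentiable ℂ fun t => G (Function.update z i t)) →
      (∀ R : ℝ, ∃ M : ℝ, ∀ z, ‖z‖ ≤ R → ‖G z‖ ≤ M) →
      ∀ R : ℝ, ∃ M : ℝ, ∀ z, ‖z‖ ≤ R → ‖_root_.qd G i z‖ ≤ M := by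
    intro G h1 h2 R
    obtain ⟨M, hM⟩ := h2 (max R 1)
    exact ⟨2 * M / max R 1, fun z hz => qd_bound h1 (by positivity) hM z
      (hz.trans (le_max_left _ _))⟩
  have hb1 := hbd F (fun z => hF.1 z i) hF.2
  refine ⟨?_, hb1⟩
  have hb2 := hbd _ (qd_diff_self (fun z => hF.1 z i)) hb1
  intro z j
  by_cases hj : j = i
  · subst hj; exact qd_diff_self (fun z => hF.1 z j) z
  have hne : ∀ z : Fin k → ℂ, z i ≠ 0 →
      Differentiable ℂ fun t => _root_.qd F i (Function.update z j t) := by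
    intro z hz
    have : (fun t => _root_.qd F i (Function.update z j t)) = fun t =>
        (F (Function.update z j t) - F (Function.update (Function.update z i 0) j t)) / z i := by
      funext t
      have h2 := qd_eq F i (Function.update z j t)
      rw [Function.update_of_ne (Ne.symm hj)] at h2
      rw [Function.update_comm (Ne.symm hj), eq_div_iff hz, h2]; ring
    rw [this]
    exact ((hF.1 z j).sub (hF.1 _ j)).div_const _
  by_cases hz : z i ≠ 0
  · exact hne z hz
  push Not at hz
  have hlim : TendstoLocallyUniformlyOn
      (fun (n : ℕ) (t : ℂ) => _root_.qd F i
        (Function.update (Function.update z i (1 / ((n : ℂ) + 1))) j t))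
      (fun t => _root_.qd F i (Function.update z j t)) atTop Set.univ := by
    rw [Metric.tendstoLocallyUniformlyOn_iff]
    intro ε hε x _
    refine ⟨ball x 1, mem_nhdsWithin_of_mem_nhds (ball_mem_nhds x one_pos), ?_⟩
    obtain ⟨M, hM⟩ := hb2 (‖z‖ + ‖x‖ + 1)
    have ht := (tendsto_one_div_add_atTop_nhds_zero_nat (𝕜 := ℝ)).mul_const M
    rw [zero_mul] at ht
    filter_upwards [ht.eventually (gt_mem_nhds hε)] with n hn y hy
    set s : ℂ := 1 / ((n : ℂ) + 1) with hs
    have hsn : ‖s‖ = 1 / ((n : ℝ) + 1) := by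
      rw [hs, norm_div, norm_one]
      congr 1
      have : ((n : ℂ) + 1) = ((n + 1 : ℕ) : ℂ) := by push_cast; ring
      rw [this, Complex.norm_natCast]; push_cast; ring
    have hs1 : ‖s‖ ≤ 1 := by
      rw [hsn, div_le_one (by positivity)]
      have : (0 : ℝ) ≤ n := by positivity
      linarith
    have h2 := qd_eq (_root_.qd F i) i (Function.update (Function.update z i s) j y)
    have e1 : Function.update (Function.update (Function.update z i s) j y) i 0 =
        Function.update z j y := by
      rw [Function.update_comm hj, Function.update_idem, ← hz, Function.update_eq_self]
    rw [e1, Function.update_of_ne (Ne.symm hj), Function.update_self] at h2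
    rw [dist_comm, dist_eq_norm, h2, add_sub_cancel_left, norm_mul, hsn]
    refine lt_of_le_of_lt ?_ hn
    gcongr
    apply hM
    have hyn : ‖y‖ ≤ ‖x‖ + 1 := by
      have h5 : ‖y - x‖ < 1 := by simpa [dist_eq_norm] using hy
      have := norm_add_le x (y - x)
      rw [add_sub_cancel] at this
      linarith
    have := norm_nonneg x
    have := norm_nonneg z
    refine norm_update_le (norm_update_le (by linarith) i (by linarith)) j (by linarith)
  rw [← differentiableOn_univ]
  refine hlim.differentiableOn (Filter.Eventually.of_forall fun n => ?_) isOpen_univ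
  refine (hne _ ?_).differentiableOn
  rw [Function.update_self]
  apply one_div_ne_zero
  exact_mod_cast Nat.succ_ne_zero n

theorem SepHol.update {F : (Fin k → ℂ) → ℂ} (hF : SepHol F) (i : Fin k) :
    SepHol (fun z => F (Function.update z i 0)) := by
  constructor
  · intro z j
    by_cases hj : j = i
    · subst hj; simp
    · have := hF.1 (Function.update z i 0) j
      simp only [Function.update_comm hj]
      exact this
  · intro R
    obtain ⟨M, hM⟩ := hF.2 R
    exact ⟨M, fun z hz => hM _ (norm_update_le hz i (by simpa using (norm_nonneg z).trans hz))⟩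

theorem taylor (r : ℝ) (hr : 0 < r) : ∀ (d : ℕ) (s : Finset (Fin k)), ∃ C : ℝ, 0 ≤ C ∧
    ∀ (M : ℝ) (F : (Fin k → ℂ) → ℂ), SepHol F →
      (∀ z w : Fin k → ℂ, (∀ i ∈ s, z i = w i) → F z = F w) →
      (∀ z, ‖z‖ ≤ r → ‖F z‖ ≤ M) →
      ∃ p : MvPolynomial (Fin k) ℂ, (∀ m, ‖coeff m p‖ ≤ C * M) ∧
        (∀ m, coeff m p ≠ 0 → m.degree ≤ d) ∧
        ∀ z, ‖z‖ ≤ r → ‖F z - eval z p‖ ≤ C * M * ‖z‖ ^ d := by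
  classical
  intro d
  induction d with
  | zero =>
    intro s
    refine ⟨1, zero_le_one, fun M F _ _ hM => ⟨0, ?_, ?_, ?_⟩⟩
    · intro m
      have := (norm_nonneg _).trans (hM 0 (by simpa using hr.le))
      simpa using this
    · simp
    · intro z hz; simpa using hM z hz
  | succ d ihd =>
    intro s
    induction s using Finset.induction_on with
    | empty =>
      refine ⟨1, zero_le_one, fun M F _ hdep hM => ⟨C (F 0), ?_, ?_, ?_⟩⟩
      · intro m
        have h0 := hM 0 (by simpa using hr.le)
        rw [coeff_C]
        split_ifs
        · simpa using h0
        · simpa using (norm_nonneg _).trans h0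
      · intro m hm
        rw [coeff_C] at hm
        split_ifs at hm with h
        · rw [← h]; simp
        · exact absurd rfl hm
      · intro z hz
        have h0 := (norm_nonneg _).trans (hM 0 (by simpa using hr.le))
        rw [hdep z 0 (by simp)]
        simp
        positivity
    | insert i s his ih =>
      obtain ⟨C1, hC1, h1⟩ := ih
      obtain ⟨C2, hC2, h2⟩ := ihd (insert i s)
      refine ⟨C1 + C2 * (2 / r), by positivity, fun M F hF hdep hM => ?_⟩
      obtain ⟨p, p1, p2, p3⟩ := h1 M (fun z => F (Function.update z i 0)) (hF.update i)
        (by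
          intro z w hzw
          apply hdep
          intro j hj
          by_cases hji : j = i
          · subst hji; simp
          · rw [Function.update_of_ne hji, Function.update_of_ne hji]
            exact hzw j (by simpa [hji] using hj))
        (fun z hz => hM _ (norm_update_le hz i (by simpa using hr.le)))
      obtain ⟨q, q1, q2, q3⟩ := h2 (2 * M / r) (_root_.qd F i) (hF.qd i)
        (by
          intro z w hzw
          unfold _root_.qd
          rw [hzw i (by simp)]
          congr 1
          funext t
          apply hdep
          intro j hj
          by_cases hji : j = i
          · subst hji; simp
          · rw [Function.update_of_ne hji, Function.update_of_ne hji]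
            exact hzw j hj)
        (qd_bound (fun z => hF.1 z i) hr hM)
      refine ⟨p + X i * q, ?_, ?_, ?_⟩
      · intro m
        have a : ‖coeff m (X i * q)‖ ≤ C2 * (2 * M / r) := by
          rw [coeff_X_mul']
          split_ifs
          · exact q1 _
          · simpa using (norm_nonneg _).trans (q1 0)
        rw [coeff_add]
        refine (norm_add_le _ _).trans ?_
        have := p1 m
        have e : (C1 + C2 * (2 / r)) * M = C1 * M + C2 * (2 * M / r) := by ring
        linarith
      · intro m hm
        by_cases hp : coeff m p = 0
        · rw [coeff_add, hp, zero_add, coeff_X_mul'] at hm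
          split_ifs at hm with h
          · have h3 := q2 _ hm
            have hle : Finsupp.single i 1 ≤ m := by
              rw [Finsupp.single_le_iff]
              have := Finsupp.mem_support_iff.1 h
              omega
            have h4 : m = (m - Finsupp.single i 1) + Finsupp.single i 1 :=
              (tsub_add_cancel_of_le hle).symm
            rw [h4, map_add, Finsupp.degree_single]; omega
          · exact absurd rfl hm
        · exact (p2 m hp)
      · intro z hz
        have e1 : F z - eval z (p + X i * q) = (F (Function.update z i 0) - eval z p) +
            z i * (_root_.qd F i z - eval z q) := by
          rw [qd_eq F i z]; simp; ring
        rw [e1]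
        refine (norm_add_le _ _).trans ?_
        have b1 := p3 z hz
        have b2 := q3 z hz
        have b3 := norm_le_pi_norm z i
        have b4 : ‖z i * (_root_.qd F i z - eval z q)‖ ≤ ‖z‖ * (C2 * (2 * M / r) * ‖z‖ ^ d) := by
          rw [norm_mul]; gcongr
        have e : (C1 + C2 * (2 / r)) * M * ‖z‖ ^ (d + 1) = C1 * M * ‖z‖ ^ (d + 1) +
          ‖z‖ * (C2 * (2 * M / r) * ‖z‖ ^ d) := by ring
        linarith

end TaylorPart

section FinalPart

open MvPolynomial

variable {k : ℕ}

/-- bounded sequences -/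
abbrev BS := BoundedContinuousFunction ℕ ℂ

/-- evaluation at `n` -/
def evn (n : ℕ) : BS →+* ℂ where
  toFun x := x n
  map_one' := rfl
  map_mul' _ _ := rfl
  map_zero' := rfl
  map_add' _ _ := rfl

/-- construct a bounded sequence -/
def mkBS (f : ℕ → ℂ) (C : ℝ) (h : ∀ n, ‖f n‖ ≤ C) : BS :=
  BoundedContinuousFunction.ofNormedAddCommGroupDiscrete f C h

theorem evn_mkBS (f : ℕ → ℂ) (C : ℝ) (h : ∀ n, ‖f n‖ ≤ C) (n : ℕ) : evn n (mkBS f C h) = f n := rfl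

theorem evn_le (x : BS) (n : ℕ) : ‖evn n x‖ ≤ ‖x‖ := x.norm_coe_le_norm n

theorem BS.ext {x y : BS} (h : ∀ n, evn n x = evn n y) : x = y :=
  BoundedContinuousFunction.ext h

/-- the shift -/
def shiftB : BS →+* BS where
  toFun x := mkBS (fun n => x (n + 1)) ‖x‖ (fun n => x.norm_coe_le_norm _)
  map_one' := rfl
  map_mul' _ _ := rfl
  map_zero' := rfl
  map_add' _ _ := rfl

theorem evn_shift (x : BS) (n : ℕ) : evn n (shiftB x) = evn (n + 1) x := rfl

theorem evn_comp_shift (n : ℕ) : (evn n).comp shiftB = evn (n + 1) := rfl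

theorem shift_norm_le (x : BS) : ‖shiftB x‖ ≤ ‖x‖ := by
  rw [BoundedContinuousFunction.norm_le (norm_nonneg _)]
  intro n
  exact x.norm_coe_le_norm _

theorem solve_fix (c r : BS) (hc : ‖c‖ < 1) : ∃ y : BS, y = c * shiftB y + r := by
  have hK : ContractingWith ⟨‖c‖, norm_nonneg _⟩ (fun y : BS => c * shiftB y + r) := by
    refine ⟨by exact_mod_cast hc, LipschitzWith.of_dist_le_mul fun x y => ?_⟩
    rw [dist_eq_norm, dist_eq_norm]
    have : c * shiftB x + r - (c * shiftB y + r) = c * shiftB (x - y) := by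
      rw [map_sub]; ring
    rw [this]
    refine (norm_mul_le _ _).trans ?_
    exact mul_le_mul_of_nonneg_left (shift_norm_le _) (norm_nonneg _)
  exact ⟨_, hK.fixedPoint_isFixedPt.symm⟩

theorem solve_main (lam : Fin k → BS) (δ ξ : ℝ) (hδ : 0 < δ) (hξ : ξ < 1)
    (h1 : ∀ i n, ‖evn n (lam i)‖ ≤ 1) (h2 : ∀ i n, δ ≤ ‖evn n (lam i)‖)
    (h3 : ∀ n, ∀ l j i : Fin k, l ≤ j →
      ‖evn n (lam i)‖ * ‖evn n (lam j)‖ ≤ ξ * ‖evn n (lam l)‖)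
    (α : Fin k →₀ ℕ) (j : Fin k) (hα : 2 ≤ α.degree) (hl : ∃ l, j ≤ l ∧ α l ≠ 0) (e : BS) :
    ∃ y : BS, lam j * y - shiftB y * ∏ i ∈ α.support, lam i ^ α i = e := by
  obtain ⟨l, hjl, hαl⟩ := hl
  set P : BS := ∏ i ∈ α.support, lam i ^ α i with hP
  have hPn : ∀ n, ‖evn n P‖ ≤ ξ * ‖evn n (lam j)‖ := by
    intro n
    have hle : Finsupp.single l 1 ≤ α := by rw [Finsupp.single_le_iff]; omega
    obtain ⟨β, rfl⟩ := exists_add_of_le hle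
    have hβ : β ≠ 0 := by
      rintro rfl
      simp at hα
    obtain ⟨i, hi⟩ := Finsupp.ne_iff.1 hβ
    have hle' : Finsupp.single i 1 ≤ β := by
      rw [Finsupp.single_le_iff]; simp at hi; omega
    obtain ⟨γ, rfl⟩ := exists_add_of_le hle'
    have hP' : P = lam l * (lam i * γ.prod fun i e => lam i ^ e) := by
      have : P = (Finsupp.single l 1 + (Finsupp.single i 1 + γ)).prod fun i e => lam i ^ e := rfl
      rw [this, Finsupp.prod_add_index' (by simp) (by intro a b c; exact pow_add _ _ _),
        Finsupp.prod_add_index' (by simp) (by intro a b c; exact pow_add _ _ _)]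
      simp
    rw [hP', map_mul, map_mul, norm_mul, norm_mul]
    have hγ : ‖evn n (γ.prod fun i e => lam i ^ e)‖ ≤ 1 := by
      rw [Finsupp.prod, map_prod, norm_prod]
      refine Finset.prod_le_one (fun _ _ => norm_nonneg _) fun i _ => ?_
      rw [map_pow, norm_pow]
      exact pow_le_one₀ (norm_nonneg _) (h1 i n)
    have := h3 n j l i hjl
    calc _ ≤ ‖evn n (lam l)‖ * (‖evn n (lam i)‖ * 1) := by gcongr
      _ ≤ _ := by linarith
  have hne : ∀ n, evn n (lam j) ≠ 0 := fun n => norm_pos_iff.1 (hδ.trans_le (h2 j n))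
  let c : BS := mkBS (fun n => evn n P / evn n (lam j)) (max ξ 0) (by
    intro n
    rw [norm_div, div_le_iff₀ (norm_pos_iff.2 (hne n))]
    refine (hPn n).trans ?_
    gcongr
    exact le_max_left _ _)
  have hc : ‖c‖ < 1 := by
    refine lt_of_le_of_lt (b := max ξ 0) ?_ (max_lt hξ one_pos)
    rw [BoundedContinuousFunction.norm_le (le_max_right _ _)]
    intro n
    change ‖evn n P / evn n (lam j)‖ ≤ _
    rw [norm_div, div_le_iff₀ (norm_pos_iff.2 (hne n))]
    refine (hPn n).trans ?_
    gcongr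
    exact le_max_left _ _
  let r : BS := mkBS (fun n => evn n e / evn n (lam j)) (‖e‖ / δ) (by
    intro n
    rw [norm_div]
    exact div_le_div₀ (norm_nonneg _) (evn_le _ _) hδ (h2 j n))
  obtain ⟨y, hy⟩ := solve_fix c r hc
  refine ⟨y, BS.ext fun n => ?_⟩
  have hyn := congrArg (evn n) hy
  rw [map_add, map_mul] at hyn
  have hcn : evn n c = evn n P / evn n (lam j) := rfl
  have hrn : evn n r = evn n e / evn n (lam j) := rfl
  rw [hcn, hrn] at hyn
  have := hne n
  rw [map_sub, map_mul, map_mul, hyn]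
  field_simp
  ring

theorem poly_lip (P : MvPolynomial (Fin k) BS) (ρ : ℝ) (hρ : 0 ≤ ρ) : ∃ B L : ℝ, 0 ≤ B ∧ 0 ≤ L ∧
    ∀ n (u w : Fin k → ℂ), ‖u‖ ≤ ρ → ‖w‖ ≤ ρ → ‖eval u (map (evn n) P)‖ ≤ B ∧
      ‖eval u (map (evn n) P) - eval w (map (evn n) P)‖ ≤ L * ‖u - w‖ := by
  induction P using MvPolynomial.induction_on with
  | C a =>
    refine ⟨‖a‖, 0, norm_nonneg _, le_rfl, fun n u w _ _ => ?_⟩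
    simp [evn_le]
  | add p q hp hq =>
    obtain ⟨B, L, hB, hL, h⟩ := hp
    obtain ⟨B', L', hB', hL', h'⟩ := hq
    refine ⟨B + B', L + L', by positivity, by positivity, fun n u w hu hw => ?_⟩
    obtain ⟨a1, a2⟩ := h n u w hu hw
    obtain ⟨b1, b2⟩ := h' n u w hu hw
    simp only [map_add]
    refine ⟨(norm_add_le _ _).trans (by linarith), ?_⟩
    rw [add_sub_add_comm]
    refine (norm_add_le _ _).trans (by linarith)
  | mul_X p i hp =>
    obtain ⟨B, L, hB, hL, h⟩ := hp
    refine ⟨B * ρ, L * ρ + B, by positivity, by positivity, fun n u w hu hw => ?_⟩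
    obtain ⟨a1, a2⟩ := h n u w hu hw
    obtain ⟨c1, -⟩ := h n w w hw hw
    have hui : ‖u i‖ ≤ ρ := (norm_le_pi_norm u i).trans hu
    have hd : ‖u i - w i‖ ≤ ‖u - w‖ := norm_le_pi_norm (u - w) i
    simp only [map_mul, map_X, eval_X]
    constructor
    · rw [norm_mul]; gcongr
    · have : eval u (map (evn n) p) * u i - eval w (map (evn n) p) * w i =
        (eval u (map (evn n) p) - eval w (map (evn n) p)) * u i +
          eval w (map (evn n) p) * (u i - w i) := by ring
      rw [this]
      refine (norm_add_le _ _).trans ?_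
      rw [norm_mul, norm_mul]
      have : (L * ρ + B) * ‖u - w‖ = L * ‖u - w‖ * ρ + B * ‖u - w‖ := by ring
      rw [this]
      gcongr

theorem poly_small (P : MvPolynomial (Fin k) BS) (d : ℕ)
    (h : ∀ m : Fin k →₀ ℕ, m.degree ≤ d → coeff m P = 0) : ∃ C : ℝ, 0 ≤ C ∧
    ∀ n (u : Fin k → ℂ), ‖u‖ ≤ 1 → ‖eval u (map (evn n) P)‖ ≤ C * ‖u‖ ^ (d + 1) := by
  refine ⟨∑ m ∈ P.support, ‖coeff m P‖, by positivity, fun n u hu => ?_⟩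
  rw [eval_map, eval₂_eq, Finset.sum_mul]
  refine (norm_sum_le _ _).trans (Finset.sum_le_sum fun m hm => ?_)
  rw [norm_mul]
  refine mul_le_mul (evn_le _ _) ?_ (norm_nonneg _) (norm_nonneg _)
  rw [norm_prod]
  have h1 : ∏ i ∈ m.support, ‖u i ^ m i‖ ≤ ∏ i ∈ m.support, ‖u‖ ^ m i := by
    refine Finset.prod_le_prod (fun _ _ => norm_nonneg _) fun i _ => ?_
    rw [norm_pow]
    gcongr
    exact norm_le_pi_norm u i
  refine h1.trans ?_
  rw [Finset.prod_pow_eq_pow_sum]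
  refine pow_le_pow_of_le_one (norm_nonneg _) hu ?_
  by_contra hlt
  rw [mem_support_iff] at hm
  apply hm
  apply h
  rw [Finsupp.degree_apply]; omega

theorem hasDerivAt_eval_single (p : MvPolynomial (Fin k) ℂ) (i : Fin k) :
    HasDerivAt (fun t : ℂ => eval (Pi.single i t) p) (coeff (Finsupp.single i 1) p) 0 := by
  classical
  induction p using MvPolynomial.induction_on with
  | C a =>
    have : coeff (Finsupp.single i 1) (C a : MvPolynomial (Fin k) ℂ) = 0 := by
      rw [coeff_C, if_neg]
      intro h
      have := congrArg (fun x => x i) h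
      simp at this
    rw [this]
    simpa using hasDerivAt_const (0 : ℂ) a
  | add p q hp hq =>
    rw [coeff_add]
    refine (hp.add hq).congr_of_eventuallyEq (Filter.Eventually.of_forall fun t => ?_)
    simp
  | mul_X p j hp =>
    by_cases hij : j = i
    · subst hij
      have h := hp.mul (hasDerivAt_id (0 : ℂ))
      have e0 : eval (Pi.single j (0 : ℂ)) p = coeff 0 p := by
        rw [Pi.single_zero]
        exact DFunLike.congr_fun MvPolynomial.eval_zero' p
      have hc : coeff (Finsupp.single j 1) (p * X j) = coeff 0 p := by
        rw [coeff_mul_X']; simp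
      rw [hc]
      simp only [id, mul_zero, zero_add, mul_one, e0] at h
      refine h.congr_of_eventuallyEq (Filter.Eventually.of_forall fun t => ?_)
      simp
    · have hc : coeff (Finsupp.single i 1) (p * X j) = 0 := by
        rw [coeff_mul_X', if_neg]
        simpa using hij
      rw [hc]
      refine (hasDerivAt_const (0 : ℂ) (0 : ℂ)).congr_of_eventuallyEq
        (Filter.Eventually.of_forall fun t => ?_)
      simp [hij]

theorem norm_le_sum (v : Ck k) : ‖v‖ ≤ ∑ j, ‖v j‖ := by
  have : v = ∑ j, EuclideanSpace.single j (v j) := by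
    ext i
    simp [Finset.sum_apply, Pi.single_apply]
  conv_lhs => rw [this]
  refine (norm_sum_le _ _).trans (le_of_eq ?_)
  simp

theorem ofLp_norm_le (v : Ck k) : ‖(fun i => v i : Fin k → ℂ)‖ ≤ ‖v‖ := by
  rw [pi_norm_le_iff_of_nonneg (norm_nonneg _)]
  intro i
  exact PiLp.norm_apply_le v i

theorem hasDerivAt_line {F : Ck k → Ck k} (hF : Differentiable ℂ F) (i : Fin k) :
    HasDerivAt (fun t : ℂ => F (EuclideanSpace.single i t)) (fderiv ℂ F 0 (EuclideanSpace.single i 1)) 0 := by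
  have h1 : HasDerivAt (fun t : ℂ => t • (EuclideanSpace.single i 1 : Ck k))
      (EuclideanSpace.single i 1) 0 := by
    simpa using (hasDerivAt_id (0 : ℂ)).smul_const (EuclideanSpace.single i 1 : Ck k)
  have h2 : HasFDerivAt F (fderiv ℂ F 0) ((0 : ℂ) • (EuclideanSpace.single i 1 : Ck k)) := by
    rw [zero_smul]; exact (hF 0).hasFDerivAt
  have := h2.comp_hasDerivAt (0 : ℂ) h1
  refine this.congr_of_eventuallyEq (Filter.Eventually.of_forall fun t => ?_)
  simp only [Function.comp]
  congr 1
  ext l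
  simp [Pi.single_apply]

theorem hasDerivAt_line_apply {F : Ck k → Ck k} (hF : Differentiable ℂ F) (j i : Fin k) :
    HasDerivAt (fun t : ℂ => F (EuclideanSpace.single i t) j) (derivMatrix F j i) 0 :=
  ((EuclideanSpace.proj (𝕜 := ℂ) j).hasFDerivAt).comp_hasDerivAt (0 : ℂ) (hasDerivAt_line hF i)

theorem sepHol_of {F : Ck k → Ck k} (hF : Differentiable ℂ F) (j : Fin k) :
    SepHol (fun z => F (WithLp.toLp 2 z) j) := by
  have hd : Differentiable ℂ (fun z : Fin k → ℂ => F (WithLp.toLp 2 z) j) := by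
    have h1 : Differentiable ℂ (fun z : Fin k → ℂ => (WithLp.toLp 2 z : Ck k)) :=
      (PiLp.continuousLinearEquiv 2 ℂ (fun _ : Fin k => ℂ)).symm.differentiable
    exact (EuclideanSpace.proj (𝕜 := ℂ) j).differentiable.comp (hF.comp h1)
  constructor
  · intro z i
    exact hd.comp (fun t => (hasFDerivAt_update z t).differentiableAt)
  · intro R
    obtain ⟨M, hM⟩ := (isCompact_closedBall (0 : Fin k → ℂ) R).exists_bound_of_continuousOn
      hd.continuous.continuousOn
    exact ⟨M, fun z hz => hM z (by simpa using hz)⟩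

theorem taylor_seq (F : ℕ → Ck k → Ck k) (hF : ∀ n, Differentiable ℂ (F n))
    (hfix : ∀ n, F n 0 = 0) (hb : ∀ n, ∀ z ∈ ball (0 : Ck k) 1, ‖F n z‖ ≤ 1)
    (d : ℕ) (hd : 1 ≤ d) :
    ∃ (f : Fin k → MvPolynomial (Fin k) BS) (C : ℝ), 0 ≤ C ∧
      (∀ n j, ∀ z ∈ ball (0 : Ck k) 1,
        ‖F n z j - eval (fun i => z i) (map (evn n) (f j))‖ ≤ C * ‖z‖ ^ (d + 1)) ∧
      (∀ j, coeff 0 (f j) = 0) ∧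
      (∀ n j i, evn n (coeff (Finsupp.single i 1) (f j)) = derivMatrix (F n) j i) := by
  classical
  obtain ⟨r, hr, hrb⟩ : ∃ r : ℝ, 0 < r ∧ ∀ z : Fin k → ℂ, ‖z‖ ≤ r → ‖(WithLp.toLp 2 z : Ck k)‖ < 1 := by
    have hc : Continuous (fun z : Fin k → ℂ => ‖(WithLp.toLp 2 z : Ck k)‖) :=
      ((PiLp.continuousLinearEquiv 2 ℂ (fun _ : Fin k => ℂ)).symm.continuous).norm
    have := hc.tendsto 0
    have h1 : ∀ᶠ z in 𝓝 (0 : Fin k → ℂ), ‖(WithLp.toLp 2 z : Ck k)‖ < 1 :=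
      this.eventually (gt_mem_nhds (by simp))
    obtain ⟨ε, hε, h⟩ := Metric.eventually_nhds_iff.1 h1
    exact ⟨ε / 2, by positivity, fun z hz => h (by simp; linarith)⟩
  obtain ⟨C, hC, hT⟩ := taylor (k := k) r hr (d + 1) Finset.univ
  have hT' := fun n j => hT 1 (fun z => F n (WithLp.toLp 2 z) j) (sepHol_of (hF n) j)
    (by intro z w h; rw [show z = w from funext fun i => h i (by simp)])
    (fun z hz => (PiLp.norm_apply_le _ j).trans (hb n _ (by simpa using hrb z hz)))
  choose p p1 p2 p3 using hT'
  simp only [mul_one] at p1 p3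
  let S := (Finsupp.finite_of_degree_le (σ := Fin k) (d + 1)).toFinset
  let f : Fin k → MvPolynomial (Fin k) BS := fun j =>
    ∑ m ∈ S, monomial m (mkBS (fun n => coeff m (p n j)) C (fun n => p1 n j m))
  have hfp : ∀ n j, map (evn n) (f j) = p n j := by
    intro n j
    ext m
    simp only [f, map_sum, map_monomial, coeff_sum, coeff_monomial, evn_mkBS]
    rw [Finset.sum_ite_eq']
    split_ifs with h
    · rfl
    · by_contra hne
      exact h (by simpa [S] using p2 n j m (Ne.symm hne))
  have hcf : ∀ n j m, evn n (coeff m (f j)) = coeff m (p n j) := by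
    intro n j m; rw [← hfp n j, coeff_map]
  choose B L hB hL hBL using fun j => poly_lip (f j) 1 zero_le_one
  have hsmall : ∀ n j (z : Ck k), ‖(fun i => z i : Fin k → ℂ)‖ ≤ r →
      ‖F n z j - eval (fun i => z i) (map (evn n) (f j))‖ ≤ C * ‖z‖ ^ (d + 1) := by
    intro n j z hz
    rw [hfp]
    refine (p3 n j (fun i => z i) hz).trans ?_
    gcongr
    exact ofLp_norm_le z
  refine ⟨f, C + ∑ j, (1 + B j) / r ^ (d + 1), ?_, ?_, ?_, ?_⟩
  · have : ∀ j, 0 ≤ (1 + B j) / r ^ (d + 1) := fun j => by have := hB j; positivity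
    have := Finset.sum_nonneg (s := Finset.univ) fun j _ => this j
    linarith
  · intro n j z hz
    have hnn : ∀ j, 0 ≤ (1 + B j) / r ^ (d + 1) := fun j => by have := hB j; positivity
    have hsum := Finset.single_le_sum (s := Finset.univ) (fun j _ => hnn j) (Finset.mem_univ j)
    have hz1 : ‖z‖ < 1 := by simpa using hz
    by_cases hzr : ‖(fun i => z i : Fin k → ℂ)‖ ≤ r
    · refine (hsmall n j z hzr).trans ?_
      gcongr
      linarith [hnn j]
    · push Not at hzr
      have hz2 : r ≤ ‖z‖ := hzr.le.trans (ofLp_norm_le z)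
      have h1 : ‖F n z j‖ ≤ 1 := (PiLp.norm_apply_le _ j).trans (hb n z hz)
      have h2 := (hBL j n (fun i => z i) (fun i => z i) ((ofLp_norm_le z).trans hz1.le)
        ((ofLp_norm_le z).trans hz1.le)).1
      calc _ ≤ 1 + B j := (norm_sub_le _ _).trans (by linarith)
        _ = (1 + B j) / r ^ (d + 1) * r ^ (d + 1) := by field_simp
        _ ≤ (C + ∑ j, (1 + B j) / r ^ (d + 1)) * ‖z‖ ^ (d + 1) := by
          gcongr
          · have := hnn j; linarith
          · linarith
  · intro j
    refine BS.ext fun n => ?_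
    rw [hcf, map_zero]
    have := p3 n j 0 (by simpa using hr.le)
    simp only [norm_zero, ne_eq, Nat.add_eq_zero_iff, one_ne_zero, and_false, not_false_eq_true,
      zero_pow, mul_zero, norm_le_zero_iff] at this
    have e0 : (WithLp.toLp 2 (0 : Fin k → ℂ) : Ck k) = 0 := rfl
    rw [e0, hfix] at this
    have e1 : eval (0 : Fin k → ℂ) (p n j) = coeff 0 (p n j) :=
      DFunLike.congr_fun MvPolynomial.eval_zero' (p n j)
    rw [e1] at this
    simpa using this
  · intro n j i
    rw [hcf]
    have h1 := hasDerivAt_line_apply (hF n) j i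
    have h2 := hasDerivAt_eval_single (p n j) i
    have h3 := h1.sub h2
    have h4 : HasFDerivAt (fun t : ℂ => F n (EuclideanSpace.single i t) j - eval (Pi.single i t) (p n j))
        (0 : ℂ →L[ℂ] ℂ) 0 := by
      refine Asymptotics.IsBigO.hasFDerivAt (n := d + 1) ?_ (by omega)
      refine Asymptotics.IsBigO.of_bound C ?_
      filter_upwards [Metric.closedBall_mem_nhds (0 : ℂ) hr] with t ht
      have ht' : ‖t‖ ≤ r := by simpa using ht
      have hn : ‖(Pi.single i t : Fin k → ℂ)‖ ≤ ‖t‖ := by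
        rw [pi_norm_le_iff_of_nonneg (norm_nonneg _)]
        intro l
        by_cases h : l = i
        · subst h; simp
        · simp [h]
      have := p3 n j (Pi.single i t) (hn.trans ht')
      rw [sub_zero, norm_pow, norm_norm]
      refine this.trans ?_
      gcongr
    have h5 := h4.hasDerivAt
    have := h3.unique h5
    simp at this
    exact (sub_eq_zero.1 this).symm

end FinalPart

theorem lower_bound_last {k : ℕ} {F : Ck k → Ck k} (hF : Differentiable ℂ F) (hfix : F 0 = 0)
    {a : ℝ} (hlow : ∀ z ∈ ball (0 : Ck k) 1, a * ‖z‖ ≤ ‖F z‖) (i : Fin k) :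
    a ≤ ‖fderiv ℂ F 0 (EuclideanSpace.single i 1)‖ := by
  have h := (hasDerivAt_line hF i).tendsto_slope_zero.norm
  refine ge_of_tendsto h ?_
  have h1 : ∀ᶠ t in 𝓝[≠] (0 : ℂ), t ∈ ball (0 : ℂ) 1 :=
    mem_nhdsWithin_of_mem_nhds (ball_mem_nhds _ one_pos)
  filter_upwards [h1, self_mem_nhdsWithin] with t ht ht0
  have hz : (EuclideanSpace.single i (0 : ℂ) : Ck k) = 0 := by
    ext l; simp
  rw [zero_add, hz, hfix, sub_zero, norm_smul, norm_inv]
  have ht0' : 0 < ‖t‖ := norm_pos_iff.2 ht0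
  rw [← div_eq_inv_mul, le_div_iff₀ ht0']
  have := hlow (EuclideanSpace.single i t) (by simpa using ht)
  simpa using this

theorem upper_bound {k : ℕ} {F : Ck k → Ck k} (hF : Differentiable ℂ F) (hfix : F 0 = 0)
    {b : ℝ} (hb0 : 0 ≤ b) (hup : ∀ z ∈ ball (0 : Ck k) 1, ‖F z‖ ≤ b * ‖z‖) (i : Fin k) :
    ‖fderiv ℂ F 0 (EuclideanSpace.single i 1)‖ ≤ b := by
  have h := (hF 0).hasFDerivAt.le_of_lip' hb0 (by
    filter_upwards [ball_mem_nhds (0 : Ck k) one_pos] with z hz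
    simpa [hfix] using hup z hz)
  have := (fderiv ℂ F 0).le_opNorm (EuclideanSpace.single i 1)
  simp at this
  linarith

theorem eval_map_bind {k : ℕ} (n : ℕ) (g : Fin k → MvPolynomial (Fin k) BS)
    (P : MvPolynomial (Fin k) BS) (z : Fin k → ℂ) :
    MvPolynomial.eval z (MvPolynomial.map (evn n) (MvPolynomial.bind₁ g P)) =
      MvPolynomial.eval (fun i => MvPolynomial.eval z (MvPolynomial.map (evn n) (g i)))
        (MvPolynomial.map (evn n) P) := by
  rw [MvPolynomial.map_bind₁]
  exact MvPolynomial.eval₂Hom_bind₁ _ _ _ _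

/-- **Proposition (bounded).** For a uniformly attracting sequence of correctly ordered
automorphisms of `ℂ^k` and any `d ≥ 2`, there are `C > 0`, a bounded sequence `X_n` of
polynomial maps of degree `≤ d` of the form `identity + h.o.t.`, and a bounded sequence `G_n`
of lower triangular polynomial maps with `G_n'(0) = F_n'(0)`, such that
`‖G_n(X_{n-1}(z)) - X_n(F_n(z))‖ ≤ C‖z‖^{d+1}` on the unit ball (indices shifted so that
`X n` plays the role of `X_{n-1}` for the `n`-th map). -/
theorem bounded_conjugating_sequences (k : ℕ) (F : ℕ → Ck k → Ck k)
    (hauto : ∀ n, IsAutomorphism (F n)) (hfix : ∀ n, F n 0 = 0)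
    (hord : ∀ n, CorrectlyOrdered (F n)) (hua : UniformlyAttracting F)
    (d : ℕ) (hd : 2 ≤ d) :
    ∃ C : ℝ, 0 < C ∧
    ∃ X : ℕ → Fin k → MvPolynomial (Fin k) ℂ,
      (∀ n j, (X n j).totalDegree ≤ d) ∧
      (∀ n j, (X n j).coeff 0 = 0) ∧
      (∀ n (j i : Fin k), (X n j).coeff (Finsupp.single i 1) = if i = j then 1 else 0) ∧
      (∃ MX : ℝ, ∀ n j m, ‖(X n j).coeff m‖ ≤ MX) ∧
    ∃ G : ℕ → Fin k → MvPolynomial (Fin k) ℂ,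
      (∀ n, LowerTriPolyMap (G n)) ∧
      (∃ DG : ℕ, ∀ n j, (G n j).totalDegree ≤ DG) ∧
      (∃ MG : ℝ, ∀ n j m, ‖(G n j).coeff m‖ ≤ MG) ∧
      (∀ n (j i : Fin k), (G n j).coeff (Finsupp.single i 1) = derivMatrix (F n) j i) ∧
      ∀ n, ∀ z ∈ ball (0 : Ck k) 1,
        ‖evalPolyMap (G n) (evalPolyMap (X n) z) - evalPolyMap (X (n + 1)) (F n z)‖
          ≤ C * ‖z‖ ^ (d + 1) := by

  classical
  obtain ⟨a, b, ha, hab, hb1, hbd, ξ, hξ, hres⟩ := hua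
  have hD : ∀ n, Differentiable ℂ (F n) := fun n => (hauto n).1
  have hb0 : 0 ≤ b := (ha.trans hab).le
  have hF1 : ∀ n, ∀ z ∈ ball (0 : Ck k) 1, ‖F n z‖ ≤ 1 := by
    intro n z hz
    have hz1 : ‖z‖ < 1 := by simpa using hz
    have := (hbd n z hz).2
    nlinarith [norm_nonneg z]
  obtain ⟨f, Cf, hCf, hf, hf0, hf1⟩ := taylor_seq F hD hfix hF1 d (by omega)
  set A : Fin k → Fin k → BS := fun j i => (f j).coeff (Finsupp.single i 1) with hAdef
  have hAn : ∀ n j i, evn n (A j i) = derivMatrix (F n) j i := hf1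
  have hAlow : ∀ j i, j < i → A j i = 0 := by
    intro j i hji
    refine BS.ext fun n => ?_
    rw [hAn, map_zero]
    exact (hord n).1 j i hji
  have hup : ∀ i n, ‖evn n (A i i)‖ ≤ 1 := by
    intro i n
    rw [hAn]
    have h1 := upper_bound (hD n) (hfix n) hb0 (fun z hz => (hbd n z hz).2) i
    exact ((PiLp.norm_apply_le (fderiv ℂ (F n) 0 (EuclideanSpace.single i 1)) i).trans h1).trans hb1.le
  have hlo : ∀ i n, a * a ≤ ‖evn n (A i i)‖ := by
    intro i n
    have hk : 0 < k := i.pos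
    let l : Fin k := ⟨k - 1, by omega⟩
    have hil : i ≤ l := by
      rw [Fin.le_def]; have := i.2; simp only [l]; omega
    have h1 := lower_bound_last (hD n) (hfix n) (fun z hz => (hbd n z hz).1) l
    have h2 : fderiv ℂ (F n) 0 (EuclideanSpace.single l 1) =
        EuclideanSpace.single l (derivMatrix (F n) l l) := by
      ext j
      by_cases hj : j = l
      · subst hj; simp [derivMatrix]
      · have hlt : j < l := by
          refine lt_of_le_of_ne ?_ hj
          rw [Fin.le_def]; have := j.2; simp only [l]; omega
        have := (hord n).1 j l hlt
        simp only [derivMatrix] at this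
        rw [this]; simp [hj]
    rw [h2, EuclideanSpace.norm_single] at h1
    have h3 := hres n i l l hil
    have h4 : a * a ≤ ‖derivMatrix (F n) l l‖ * ‖derivMatrix (F n) l l‖ := by gcongr
    rw [hAn]
    nlinarith [norm_nonneg (derivMatrix (F n) i i)]
  obtain ⟨X, G, hI, hE⟩ := alg_main shiftB d hd f A hf0 (fun _ _ => rfl) hAlow
    (solve_main (fun i => A i i) (a * a) ξ (by positivity) hξ hup hlo
      (by intro n l j i hlj; simp only [hAn]; exact hres n l j i hlj))
  choose CE hCE hCE' using fun j => poly_small _ d (hE j)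
  choose Bf _ hBf _ hBf' using fun j => poly_lip (f j) 1 zero_le_one
  set ρ : ℝ := 1 + ∑ j, Bf j with hρ
  have hsB : 0 ≤ ∑ j, Bf j := Finset.sum_nonneg fun j _ => hBf j
  choose _ L _ hL hL' using fun j => poly_lip (MvPolynomial.map shiftB (X j)) ρ (by positivity)
  have hcoef : ∀ (P : Fin k → MvPolynomial (Fin k) BS), ∃ M : ℝ, ∀ n j m,
      ‖(MvPolynomial.map (evn n) (P j)).coeff m‖ ≤ M := by
    intro P
    have hnn : ∀ j, 0 ≤ ∑ m ∈ (P j).support, ‖(P j).coeff m‖ := fun j => by positivity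
    refine ⟨∑ j, ∑ m ∈ (P j).support, ‖(P j).coeff m‖, fun n j m => ?_⟩
    refine le_trans ?_ (Finset.single_le_sum (s := Finset.univ) (fun j _ => hnn j) (Finset.mem_univ j))
    rw [MvPolynomial.coeff_map]
    by_cases hm : m ∈ (P j).support
    · exact (evn_le _ _).trans
        (Finset.single_le_sum (f := fun m => ‖(P j).coeff m‖) (fun _ _ => norm_nonneg _) hm)
    · rw [MvPolynomial.notMem_support_iff.1 hm, map_zero, norm_zero]
      exact hnn j
  have hmapne : ∀ n (P : MvPolynomial (Fin k) BS) m,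
      (MvPolynomial.map (evn n) P).coeff m ≠ 0 → P.coeff m ≠ 0 := by
    intro n P m h h'
    rw [MvPolynomial.coeff_map, h', map_zero] at h
    exact h rfl
  have hdeg : ∀ n (P : MvPolynomial (Fin k) BS), (∀ m, P.coeff m ≠ 0 → m.degree ≤ d) →
      (MvPolynomial.map (evn n) P).totalDegree ≤ d := by
    intro n P h
    unfold MvPolynomial.totalDegree
    refine Finset.sup_le fun m hm => ?_
    exact h m (hmapne n _ m (MvPolynomial.mem_support_iff.1 hm))
  refine ⟨1 + ∑ j, (CE j + L j * Cf), ?_, fun n j => MvPolynomial.map (evn n) (X j), ?_, ?_, ?_,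
    hcoef X, fun n j => MvPolynomial.map (evn n) (G j), ?_, ⟨d, ?_⟩, hcoef G, ?_, ?_⟩
  · have := Finset.sum_nonneg (s := Finset.univ) fun j _ =>
      add_nonneg (hCE j) (mul_nonneg (hL j) hCf)
    linarith
  · exact fun n j => hdeg n _ (hI.Xdeg j)
  · intro n j; rw [MvPolynomial.coeff_map, hI.X0, map_zero]
  · intro n j i; rw [MvPolynomial.coeff_map, hI.X1]; split_ifs <;> simp
  · intro n j
    refine ⟨by rw [MvPolynomial.coeff_map, hI.G0, map_zero], fun m hm => ?_⟩
    exact hI.Glow j m (hmapne n _ m (MvPolynomial.mem_support_iff.1 hm))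
  · exact fun n j => hdeg n _ (hI.Gdeg j)
  · intro n j i; rw [MvPolynomial.coeff_map, hI.G1]; exact hAn n j i
  · intro n z hz
    have hz1 : ‖z‖ < 1 := by simpa using hz
    set u : Fin k → ℂ := fun i => z i with hu
    have hu1 : ‖u‖ ≤ ‖z‖ := ofLp_norm_le z
    set fz : Fin k → ℂ := fun i => MvPolynomial.eval u (MvPolynomial.map (evn n) (f i)) with hfz
    have hfzρ : ‖fz‖ ≤ ρ := by
      rw [pi_norm_le_iff_of_nonneg (by positivity)]
      intro i
      have h1 := (hBf' i n u u (hu1.trans hz1.le) (hu1.trans hz1.le)).1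
      have h2 := Finset.single_le_sum (s := Finset.univ) (fun j _ => hBf j) (Finset.mem_univ i)
      simp only [hfz]
      linarith
    have hFzρ : ‖(fun i => F n z i : Fin k → ℂ)‖ ≤ ρ :=
      (ofLp_norm_le (F n z)).trans ((hF1 n z hz).trans (by linarith))
    have hdiff : ‖fz - (fun i => F n z i : Fin k → ℂ)‖ ≤ Cf * ‖z‖ ^ (d + 1) := by
      rw [pi_norm_le_iff_of_nonneg (by positivity)]
      intro i
      rw [Pi.sub_apply, norm_sub_rev]
      exact hf n i z hz
    refine (norm_le_sum _).trans ?_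
    rw [add_mul, Finset.sum_mul]
    refine le_trans (Finset.sum_le_sum fun j _ => ?_) (le_add_of_nonneg_left (by positivity))
    have e1 : (evalPolyMap (fun j => MvPolynomial.map (evn n) (G j))
          (evalPolyMap (fun j => MvPolynomial.map (evn n) (X j)) z) -
        evalPolyMap (fun j => MvPolynomial.map (evn (n + 1)) (X j)) (F n z)) j =
        MvPolynomial.eval u (MvPolynomial.map (evn n)
          (MvPolynomial.bind₁ X (G j) - MvPolynomial.bind₁ f (MvPolynomial.map shiftB (X j)))) +
        (MvPolynomial.eval fz (MvPolynomial.map (evn n) (MvPolynomial.map shiftB (X j))) -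
         MvPolynomial.eval (fun i => F n z i) (MvPolynomial.map (evn n) (MvPolynomial.map shiftB (X j)))) := by
      rw [map_sub, map_sub, eval_map_bind, eval_map_bind]
      simp only [MvPolynomial.map_map, evn_comp_shift]
      simp [evalPolyMap, hu, hfz]
    rw [e1]
    refine (norm_add_le _ _).trans ?_
    have b1 := hCE' j n u (hu1.trans hz1.le)
    have b2 := (hL' j n fz (fun i => F n z i) hfzρ hFzρ).2
    have b3 : CE j * ‖u‖ ^ (d + 1) ≤ CE j * ‖z‖ ^ (d + 1) := by
      have := hCE j
      gcongr
    have b4 : L j * ‖fz - (fun i => F n z i : Fin k → ℂ)‖ ≤ L j * (Cf * ‖z‖ ^ (d + 1)) := by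
      have := hL j
      gcongr
    have : (CE j + L j * Cf) * ‖z‖ ^ (d + 1) =
      CE j * ‖z‖ ^ (d + 1) + L j * (Cf * ‖z‖ ^ (d + 1)) := by ring
    linarith
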